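/- arXiv:1907.06761 — 2 statements merged into one kernel-verified Lean document; each statement's English description precedes it below -/
import Mathlib

section
/- Suppose n is even. Then for all nonnegative integers i, j with 2i + j ≤ 2n, the following identity holds in A: O(2n−2i−j, i, j) = λ^{i+j}·O(j−1, i+1, 2n−2i−j−1) if j is odd; O(2n−2i−j, i, j) = λ^{i+j}·O(j+1, i−1, 2n−2i−j+1) if j is even and i ≠ 0; and O(2n−2i−j, i, j) = λ^{i+j}·O(j, 0, 2n−j) if j is even and i = 0. -/
/-!
Setting: `lam n = exp(2πi/n)` is a primitive `n`-th root of unity in `ℂ`.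
`DUAlg` is the graded down-up algebra `A(0,1) = ℂ⟨u,d⟩/(d²u - ud², du² - u²d)`,
with generators `uGen`, `dGen`.  The automorphism `g` (of order `2n`) is
determined by `g u = d`, `g d = lam n • u`, and generates the cyclic group `G`,
so that the fixed subring `A^G` is `{a | g a = a}`.  The orbit sum is
`orbitSum n a b c = u^a (du)^b d^c + (lam n)^(b+c) • (d^a (ud)^b u^c)`.
-/

noncomputable section

/-- `lam n = exp(2πi/n)`, a primitive `n`-th root of unity. -/
def lam (n : ℕ) : ℂ := Complex.exp (2 * (Real.pi : ℂ) * Complex.I / (n : ℂ))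

/-- The defining relations of the down-up algebra `A(0,1)`:
`d²u = ud²` and `du² = u²d` (here `0` plays the role of `u`, `1` of `d`). -/
inductive DownUpRel : FreeAlgebra ℂ (Fin 2) → FreeAlgebra ℂ (Fin 2) → Prop
  | rel1 : DownUpRel (FreeAlgebra.ι ℂ 1 * FreeAlgebra.ι ℂ 1 * FreeAlgebra.ι ℂ 0)
      (FreeAlgebra.ι ℂ 0 * FreeAlgebra.ι ℂ 1 * FreeAlgebra.ι ℂ 1)
  | rel2 : DownUpRel (FreeAlgebra.ι ℂ 1 * FreeAlgebra.ι ℂ 0 * FreeAlgebra.ι ℂ 0)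
      (FreeAlgebra.ι ℂ 0 * FreeAlgebra.ι ℂ 0 * FreeAlgebra.ι ℂ 1)

/-- The graded down-up algebra `A(0,1)`. -/
abbrev DUAlg : Type := RingQuot DownUpRel

/-- The generator `u` of `A(0,1)`. -/
def uGen : DUAlg := RingQuot.mkAlgHom ℂ DownUpRel (FreeAlgebra.ι ℂ 0)

/-- The generator `d` of `A(0,1)`. -/
def dGen : DUAlg := RingQuot.mkAlgHom ℂ DownUpRel (FreeAlgebra.ι ℂ 1)

/-- Orbit sum `O(a,b,c) = u^a (du)^b d^c + λ^(b+c) d^a (ud)^b u^c`. -/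
def orbitSum (n a b c : ℕ) : DUAlg :=
  uGen ^ a * (dGen * uGen) ^ b * dGen ^ c
    + (lam n ^ (b + c)) • (dGen ^ a * (uGen * dGen) ^ b * uGen ^ c)

/-!
The defining relations say that `u²` and `d²` are central.  Hence, for `a` and `c` odd,
`u^a (du)^b d^c = d^(c-1) (ud)^(b+1) u^(a-1)`: move the even powers outwards past the core
`u (du)^b d = (ud)^(b+1)`.  For even exponents the same identity is read from right to left.
Exchanging `u` and `d` gives the matching identity for the other summand, so the two summands of
an orbit sum become, in the opposite order, the summands of the rewritten one.  The scalars agree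
because the exponents of `λ` in front of the two orbit sums add up to the degree, and `λ` to that
power is `1`.
-/

section Monoid

variable {M : Type*} [Monoid M] {u d : M}

theorem mul_mul_pow_mul_eq_pow_succ (b : ℕ) :
    u * (d * u) ^ b * d = (u * d) ^ (b + 1) := by
  rw [← mul_pow_mul, mul_assoc, ← pow_succ]

theorem commute_pow_of_even (hu : Commute (u ^ 2) d) {a : ℕ} (ha : Even a) :
    Commute (u ^ a) d := by
  obtain ⟨k, rfl⟩ := ha.two_dvd
  rw [pow_mul]
  exact hu.pow_left k

theorem pow_mul_mul_pow_mul_pow_of_odd (hu : Commute (u ^ 2) d) (hd : Commute (d ^ 2) u)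
    {a c : ℕ} (ha : Odd a) (hc : Odd c) (b : ℕ) :
    u ^ a * (d * u) ^ b * d ^ c = d ^ (c - 1) * (u * d) ^ (b + 1) * u ^ (a - 1) := by
  obtain ⟨k, rfl⟩ := ha
  obtain ⟨m, rfl⟩ := hc
  simp only [Nat.add_sub_cancel]
  have hud : Commute (u ^ (2 * k)) d := commute_pow_of_even hu (even_two_mul k)
  have hdu : Commute (d ^ (2 * m)) u := commute_pow_of_even hd (even_two_mul m)
  have hu_core : Commute (u ^ (2 * k)) ((u * d) ^ (b + 1)) :=
    ((Commute.pow_self u _).mul_right hud).pow_right _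
  have hd_core : Commute (d ^ (2 * m)) ((u * d) ^ (b + 1)) :=
    (hdu.mul_right (Commute.pow_self d _)).pow_right _
  calc u ^ (2 * k + 1) * (d * u) ^ b * d ^ (2 * m + 1)
      = u ^ (2 * k) * (u * (d * u) ^ b * d) * d ^ (2 * m) := by
        rw [pow_succ, pow_succ']; simp only [mul_assoc]
    _ = u ^ (2 * k) * (u * d) ^ (b + 1) * d ^ (2 * m) := by
        rw [mul_mul_pow_mul_eq_pow_succ]
    _ = d ^ (2 * m) * (u ^ (2 * k) * (u * d) ^ (b + 1)) :=
        ((hdu.pow_right _).mul_right hd_core).eq.symm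
    _ = d ^ (2 * m) * (u * d) ^ (b + 1) * u ^ (2 * k) := by
        rw [hu_core.eq, mul_assoc]

theorem pow_mul_mul_pow_mul_pow_of_even (hu : Commute (u ^ 2) d) (hd : Commute (d ^ 2) u)
    {a b c : ℕ} (ha : Even a) (hc : Even c) (hb : b ≠ 0) :
    u ^ a * (d * u) ^ b * d ^ c = d ^ (c + 1) * (u * d) ^ (b - 1) * u ^ (a + 1) := by
  simpa only [Nat.add_sub_cancel, Nat.sub_one_add_one hb] using
    (pow_mul_mul_pow_mul_pow_of_odd hd hu hc.add_one ha.add_one (b - 1)).symm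

end Monoid

theorem commute_uGen_sq_dGen : Commute (uGen ^ 2) dGen := by
  have hrel : dGen * uGen * uGen = uGen * uGen * dGen := by
    simpa only [map_mul, uGen, dGen] using RingQuot.mkAlgHom_rel ℂ DownUpRel.rel2
  rw [commute_iff_eq, pow_two, ← hrel, mul_assoc]

theorem commute_dGen_sq_uGen : Commute (dGen ^ 2) uGen := by
  have hrel : dGen * dGen * uGen = uGen * dGen * dGen := by
    simpa only [map_mul, uGen, dGen] using RingQuot.mkAlgHom_rel ℂ DownUpRel.rel1
  rw [commute_iff_eq, pow_two, hrel, mul_assoc]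

theorem isPrimitiveRoot_lam {n : ℕ} (hn : 0 < n) : IsPrimitiveRoot (lam n) n :=
  Complex.isPrimitiveRoot_exp n hn.ne'

section OrbitSum

variable {n a b c : ℕ}

theorem orbitSum_eq_smul_of_summands_eq {a' b' c' : ℕ}
    (hlam : lam n ^ (b + c + (b' + c')) = 1)
    (hu : uGen ^ a * (dGen * uGen) ^ b * dGen ^ c =
      dGen ^ a' * (uGen * dGen) ^ b' * uGen ^ c')
    (hd : dGen ^ a * (uGen * dGen) ^ b * uGen ^ c =
      uGen ^ a' * (dGen * uGen) ^ b' * dGen ^ c') :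
    orbitSum n a b c = lam n ^ (b + c) • orbitSum n a' b' c' := by
  rw [orbitSum, orbitSum, hu, hd, smul_add, smul_smul, ← pow_add, hlam, one_smul, add_comm]

theorem orbitSum_eq_smul_of_odd (hlam : lam n ^ (a + 2 * b + c) = 1) (ha : Odd a) (hc : Odd c) :
    orbitSum n a b c = lam n ^ (b + c) • orbitSum n (c - 1) (b + 1) (a - 1) := by
  have hdeg : b + c + (b + 1 + (a - 1)) = a + 2 * b + c := by have := ha.pos; omega
  exact orbitSum_eq_smul_of_summands_eq (hdeg ▸ hlam)
    (pow_mul_mul_pow_mul_pow_of_odd commute_uGen_sq_dGen commute_dGen_sq_uGen ha hc b)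
    (pow_mul_mul_pow_mul_pow_of_odd commute_dGen_sq_uGen commute_uGen_sq_dGen ha hc b)

theorem orbitSum_eq_smul_of_even (hlam : lam n ^ (a + 2 * b + c) = 1) (ha : Even a) (hc : Even c)
    (hb : b ≠ 0) :
    orbitSum n a b c = lam n ^ (b + c) • orbitSum n (c + 1) (b - 1) (a + 1) := by
  have hdeg : b + c + (b - 1 + (a + 1)) = a + 2 * b + c := by omega
  exact orbitSum_eq_smul_of_summands_eq (hdeg ▸ hlam)
    (pow_mul_mul_pow_mul_pow_of_even commute_uGen_sq_dGen commute_dGen_sq_uGen ha hc hb)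
    (pow_mul_mul_pow_mul_pow_of_even commute_dGen_sq_uGen commute_uGen_sq_dGen ha hc hb)

theorem orbitSum_zero_eq_smul_of_even (hlam : lam n ^ (a + c) = 1) (ha : Even a) :
    orbitSum n a 0 c = lam n ^ c • orbitSum n c 0 a := by
  have hdeg : 0 + c + (0 + a) = a + c := by omega
  have hu : Commute (uGen ^ a) (dGen ^ c) :=
    (commute_pow_of_even commute_uGen_sq_dGen ha).pow_right c
  have hd : Commute (dGen ^ a) (uGen ^ c) :=
    (commute_pow_of_even commute_dGen_sq_uGen ha).pow_right c
  simpa only [zero_add] using orbitSum_eq_smul_of_summands_eq (b := 0) (b' := 0) (hdeg ▸ hlam)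
    (by simpa only [pow_zero, mul_one] using hu.eq)
    (by simpa only [pow_zero, mul_one] using hd.eq)

end OrbitSum

theorem orbitSum_rewrite_even_general {n N : ℕ} (hn : 0 < n) (hN : Even N) (hnN : n ∣ N)
    (i j : ℕ) (hij : 2 * i + j ≤ N) :
    (Odd j →
      orbitSum n (N - 2 * i - j) i j =
        (lam n ^ (i + j)) • orbitSum n (j - 1) (i + 1) (N - 2 * i - j - 1)) ∧
    (Even j → i ≠ 0 →
      orbitSum n (N - 2 * i - j) i j =
        (lam n ^ (i + j)) • orbitSum n (j + 1) (i - 1) (N - 2 * i - j + 1)) ∧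
    (Even j → i = 0 →
      orbitSum n (N - 2 * i - j) i j =
        (lam n ^ (i + j)) • orbitSum n j 0 (N - j)) := by
  obtain ⟨a, ha⟩ : ∃ a, a = N - 2 * i - j := ⟨_, rfl⟩
  obtain rfl : N = a + 2 * i + j := by omega
  have hlam : lam n ^ (a + 2 * i + j) = 1 := ((isPrimitiveRoot_lam hn).pow_eq_one_iff_dvd _).2 hnN
  have hparity : Even a ↔ Even j := by
    simpa only [Nat.even_add, even_two_mul, iff_true] using hN
  rw [← ha]
  refine ⟨fun hj => ?_, fun hj hi => ?_, ?_⟩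
  · have ha_odd : Odd a := by rwa [← Nat.not_even_iff_odd, hparity, Nat.not_even_iff_odd]
    exact orbitSum_eq_smul_of_odd hlam ha_odd hj
  · exact orbitSum_eq_smul_of_even hlam (hparity.2 hj) hj hi
  · rintro hj rfl
    simpa only [mul_zero, add_zero, zero_add, Nat.add_sub_cancel] using
      orbitSum_zero_eq_smul_of_even hlam (hparity.2 hj)

/-- For `n` even and `2i + j ≤ 2n`, a degree-`2n` orbit sum whose triple is not
in the chosen basis can be rewritten (formula (3.1) of the paper). -/
theorem orbitSum_rewrite_even (n : ℕ) (hn : 0 < n) (hne : Even n)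
    (i j : ℕ) (hij : 2 * i + j ≤ 2 * n) :
    (Odd j →
      orbitSum n (2 * n - 2 * i - j) i j =
        (lam n ^ (i + j)) • orbitSum n (j - 1) (i + 1) (2 * n - 2 * i - j - 1)) ∧
    (Even j → i ≠ 0 →
      orbitSum n (2 * n - 2 * i - j) i j =
        (lam n ^ (i + j)) • orbitSum n (j + 1) (i - 1) (2 * n - 2 * i - j + 1)) ∧
    (Even j → i = 0 →
      orbitSum n (2 * n - 2 * i - j) i j =
        (lam n ^ (i + j)) • orbitSum n j 0 (2 * n - j)) :=
  orbitSum_rewrite_even_general hn (even_two_mul n) (dvd_mul_left n 2) i j hij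
end
end

section
/- Suppose n is odd, and let i, j, p, q be nonnegative integers with 2i+j ≤ n and 2p+q ≤ 2n. Then the product O(n−2i−j, i, j)·O(2n−2p−q, p, q) in A is given as follows. If j is even and q is odd: it equals λ^{p+q}·O(n−2i−j+q−1, i+p+1, 2n−2p−q+j−1) + O(3n−j−2p−q, p−i, q+j+2i) when p ≥ i, and λ^{p+q}·O(n−2i−j+q−1, i+p+1, 2n−2p−q+j−1) + O(3n−2i−j−q+1, i−p−1, j+2p+q+1) when p < i. If j and q are both odd: it equals O(3n−2i−j−2p−q−1, i+p+1, j+q−1) + λ^{p+q}·O(n−j+q, p−i, 2n−2p−q+j+2i) when p ≥ i, and O(3n−2i−j−2p−q−1, i+p+1, j+q−1) + λ^{p+q}·O(n−2i−j+q+2p+1, i−p−1, 2n−q+j+1) when p < i. If j and q are both even: it equals O(3n−2i−j−2p−q, i+p, j+q) + λ^{p+q}·O(n−2i−j+q+2p, i−p, 2n+j−q) when p ≤ i, and O(3n−2i−j−2p−q, i+p, j+q) + λ^{p+q}·O(n−j+q+1, p−i−1, 2n+2i+j−2p−q+1) when p > i. If j is odd and q is even: it equals λ^{p+q}·O(n−2i−j+q,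 i+p, 2n−2p−q+j) + O(3n−2i−j−q, i−p, q+j+2p) when p ≤ i, and λ^{p+q}·O(n−2i−j+q, i+p, 2n−2p−q+j) + O(3n−2p−j−q+1, p−i−1, j+2i+q+1) when p > i. -/
/-!
Setting: `lam n = exp(2πi/n)` is a primitive `n`-th root of unity in `ℂ`.
`DUAlg` is the graded down-up algebra `A(0,1) = ℂ⟨u,d⟩/(d²u - ud², du² - u²d)`,
with generators `uGen`, `dGen`.  The automorphism `g` (of order `2n`) is
determined by `g u = d`, `g d = lam n • u`, and generates the cyclic group `G`,
so that the fixed subring `A^G` is `{a | g a = a}`.  The orbit sum is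
`orbitSum n a b c = u^a (du)^b d^c + (lam n)^(b+c) • (d^a (ud)^b u^c)`.
-/

noncomputable section

/-!
Write `x = du` and `y = ud`. The defining relations say that `u²` and `d²` commute with `u` and
`d`; hence even powers of `u` and `d` commute with everything in sight, odd powers interchange `x`
and `y`, and `xy = yx = u²d²`. A product of two monomials thereby becomes `u^a * x^b * d^c`, or
`u^a * (x^i * y^p) * d^c`, or the same with `x` and `y` exchanged. Cancelling `xy` in the latter
two leaves a power of `x`, or one of `y`, which `y^(r+1) = u * x^r * d` turns into a power of `x`;
this is the comparison of `p` with `i`. The relations are symmetric in `u` and `d`, so of the four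
products of terms in a product of two orbit sums only two have to be computed, and
`λ^(deg O(B, p, q)) = 1` matches the coefficients.
-/

/-- The relations `du² = u²d` and `d²u = ud²` of `A(0,1)`, for two elements of any monoid. Unlike a
presentation of the algebra, this is visibly symmetric in `u` and `d`. -/
structure IsDownUpPair {M : Type*} [Monoid M] (u d : M) : Prop where
  commute_sq_left : Commute (u ^ 2) d
  commute_sq_right : Commute (d ^ 2) u

/-- The Poincaré–Birkhoff–Witt monomial `u^a (du)^b d^c` of the down-up algebra. The second term of
an orbit sum is a multiple of the monomial with the same exponents and `u`, `d` exchanged. -/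
def downUpMonomial {M : Type*} [Monoid M] (u d : M) (a b c : ℕ) : M :=
  u ^ a * (d * u) ^ b * d ^ c

theorem pow_mul_downUpMonomial_mul_pow {M : Type*} [Monoid M] (u d : M) (a a' b c c' : ℕ) :
    u ^ a * downUpMonomial u d a' b c' * d ^ c = downUpMonomial u d (a + a') b (c' + c) := by
  simp only [downUpMonomial, pow_add, mul_assoc]

namespace IsDownUpPair

variable {M : Type*} [Monoid M] {u d : M}

theorem symm (h : IsDownUpPair u d) : IsDownUpPair d u :=
  ⟨h.commute_sq_right, h.commute_sq_left⟩

theorem commute_pow_of_even (h : IsDownUpPair u d) {k : ℕ} (hk : Even k) : Commute (u ^ k) d := by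
  obtain ⟨m, rfl⟩ := hk
  rw [← two_mul, pow_mul]
  exact h.commute_sq_left.pow_left m

theorem commute_pow_mul_of_even (h : IsDownUpPair u d) {k : ℕ} (hk : Even k) :
    Commute (u ^ k) (d * u) :=
  (h.commute_pow_of_even hk).mul_right (Commute.pow_self u k)

theorem commute_pow_mul_swap_of_even (h : IsDownUpPair u d) {k : ℕ} (hk : Even k) :
    Commute (u ^ k) (u * d) :=
  (Commute.pow_self u k).mul_right (h.commute_pow_of_even hk)

theorem semiconjBy_pow_of_odd (h : IsDownUpPair u d) {k : ℕ} (hk : Odd k) :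
    SemiconjBy (u ^ k) (u * d) (d * u) := by
  have semiconj_u : SemiconjBy u (u * d) (d * u) := by
    rw [SemiconjBy, ← mul_assoc, mul_assoc d, ← pow_two, h.commute_sq_left.eq]
  obtain ⟨m, rfl⟩ := hk
  rw [pow_succ]
  exact SemiconjBy.mul_left (h.commute_pow_mul_of_even (even_two_mul m)) semiconj_u

theorem semiconjBy_pow_swap_of_odd (h : IsDownUpPair u d) {k : ℕ} (hk : Odd k) :
    SemiconjBy (u ^ k) (d * u) (u * d) := by
  have semiconj_u : SemiconjBy u (d * u) (u * d) := (mul_assoc u d u).symm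
  obtain ⟨m, rfl⟩ := hk
  rw [pow_succ]
  exact SemiconjBy.mul_left (h.commute_pow_mul_swap_of_even (even_two_mul m)) semiconj_u

theorem mul_mul_swap (h : IsDownUpPair u d) : d * u * (u * d) = u ^ 2 * d ^ 2 :=
  calc d * u * (u * d) = d * u ^ 2 * d := by simp only [pow_two, mul_assoc]
    _ = u ^ 2 * d ^ 2 := by rw [← h.commute_sq_left.eq, mul_assoc, pow_two d]

theorem commute_mul_swap (h : IsDownUpPair u d) : Commute (d * u) (u * d) :=
  calc d * u * (u * d) = u ^ 2 * d ^ 2 := h.mul_mul_swap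
    _ = d ^ 2 * u ^ 2 := (h.commute_sq_left.pow_right 2).eq
    _ = u * d * (d * u) := h.symm.mul_mul_swap.symm

theorem mul_pow_mul_swap_pow (h : IsDownUpPair u d) (k : ℕ) :
    (d * u) ^ k * (u * d) ^ k = u ^ (2 * k) * d ^ (2 * k) := by
  rw [← h.commute_mul_swap.mul_pow, h.mul_mul_swap, (h.commute_sq_left.pow_right 2).mul_pow,
    pow_mul, pow_mul]

theorem mul_pow_mul_swap_pow_of_le (h : IsDownUpPair u d) {i p : ℕ} (hpi : p ≤ i) :
    (d * u) ^ i * (u * d) ^ p = downUpMonomial u d (2 * p) (i - p) (2 * p) :=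
  calc (d * u) ^ i * (u * d) ^ p = (d * u) ^ (i - p) * ((d * u) ^ p * (u * d) ^ p) := by
        rw [← mul_assoc, pow_sub_mul_pow _ hpi]
    _ = (d * u) ^ (i - p) * u ^ (2 * p) * d ^ (2 * p) := by
        rw [h.mul_pow_mul_swap_pow, mul_assoc]
    _ = u ^ (2 * p) * (d * u) ^ (i - p) * d ^ (2 * p) := by
        rw [((h.commute_pow_mul_of_even (even_two_mul p)).pow_right (i - p)).eq]

theorem mul_pow_mul_swap_pow_of_lt (h : IsDownUpPair u d) {i p : ℕ} (hip : i < p) :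
    (d * u) ^ i * (u * d) ^ p =
      downUpMonomial u d (2 * i + 1) (p - i - 1) (2 * i + 1) := by
  obtain ⟨r, rfl⟩ := Nat.exists_eq_add_of_lt hip
  have swap_pow_succ : (u * d) ^ (r + 1) = u * (d * u) ^ r * d := by
    rw [pow_succ, ← mul_assoc, (SemiconjBy.pow_right (mul_assoc u d u).symm r).eq]
  have commute_d : Commute (d ^ (2 * i)) (u * (d * u) ^ r) :=
    (h.symm.commute_pow_of_even (even_two_mul i)).mul_right
      ((h.symm.commute_pow_mul_swap_of_even (even_two_mul i)).pow_right r)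
  calc (d * u) ^ i * (u * d) ^ (i + r + 1)
      = u ^ (2 * i) * (d ^ (2 * i) * (u * (d * u) ^ r)) * d := by
        rw [add_assoc, pow_add, ← mul_assoc, h.mul_pow_mul_swap_pow, swap_pow_succ]
        simp only [mul_assoc]
    _ = u ^ (2 * i + 1) * (d * u) ^ r * d ^ (2 * i + 1) := by
        rw [commute_d.eq]
        simp only [pow_succ, mul_assoc]
    _ = downUpMonomial u d (2 * i + 1) (i + r + 1 - i - 1) (2 * i + 1) := by
        rw [downUpMonomial, show i + r + 1 - i - 1 = r by omega]

section Products

variable {A i j B p q : ℕ}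

theorem pow_mul_mul_pow_of_le (h : IsDownUpPair u d) (a c : ℕ) (hpi : p ≤ i) :
    u ^ a * ((d * u) ^ i * (u * d) ^ p) * d ^ c =
      downUpMonomial u d (a + 2 * p) (i - p) (c + 2 * p) := by
  rw [h.mul_pow_mul_swap_pow_of_le hpi, pow_mul_downUpMonomial_mul_pow, add_comm c]

theorem pow_mul_mul_pow_of_lt (h : IsDownUpPair u d) (a c : ℕ) (hip : i < p) :
    u ^ a * ((d * u) ^ i * (u * d) ^ p) * d ^ c =
      downUpMonomial u d (a + 2 * i + 1) (p - i - 1) (c + 2 * i + 1) := by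
  rw [h.mul_pow_mul_swap_pow_of_lt hip, pow_mul_downUpMonomial_mul_pow, ← add_assoc,
    add_comm _ c, ← add_assoc]

theorem downUpMonomial_mul_pow_mul_mul_pow (h : IsDownUpPair u d) (hB : Even B) {c : ℕ}
    {w w' : M} (hw : d ^ j * w = w' * d ^ c) :
    downUpMonomial u d A i j * (u ^ B * w * d ^ q) =
      u ^ (A + B) * ((d * u) ^ i * w') * d ^ (c + q) := by
  have commute_d : Commute (u ^ B) (d ^ j) := (h.commute_pow_of_even hB).pow_right j
  have commute_x : Commute (u ^ B) ((d * u) ^ i) := (h.commute_pow_mul_of_even hB).pow_right i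
  calc downUpMonomial u d A i j * (u ^ B * w * d ^ q)
      = u ^ A * (d * u) ^ i * (d ^ j * u ^ B) * w * d ^ q := by
        simp only [downUpMonomial, mul_assoc]
    _ = u ^ A * ((d * u) ^ i * u ^ B) * (d ^ j * w) * d ^ q := by
        rw [← commute_d.eq]
        simp only [mul_assoc]
    _ = u ^ (A + B) * ((d * u) ^ i * w') * d ^ (c + q) := by
        rw [← commute_x.eq, hw]
        simp only [pow_add, mul_assoc]

theorem downUpMonomial_mul_of_even_even (h : IsDownUpPair u d) (hj : Even j) (hB : Even B) :
    downUpMonomial u d A i j * downUpMonomial u d B p q =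
      downUpMonomial u d (A + B) (i + p) (j + q) := by
  have commute_x : Commute (d ^ j) ((d * u) ^ p) :=
    (h.symm.commute_pow_mul_swap_of_even hj).pow_right p
  exact (h.downUpMonomial_mul_pow_mul_mul_pow hB commute_x).trans <| by
    rw [← pow_add, downUpMonomial]

theorem downUpMonomial_mul_of_odd_even (h : IsDownUpPair u d) (hj : Odd j) (hB : Even B) :
    downUpMonomial u d A i j * downUpMonomial u d B p q =
      u ^ (A + B) * ((d * u) ^ i * (u * d) ^ p) * d ^ (j + q) :=
  h.downUpMonomial_mul_pow_mul_mul_pow hB ((h.symm.semiconjBy_pow_of_odd hj).pow_right p)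

theorem downUpMonomial_mul_of_even_odd (h : IsDownUpPair u d) (hj : Even j) (hB : Odd B) :
    downUpMonomial u d A i j * downUpMonomial u d B p q =
      u ^ (A + B) * ((d * u) ^ p * (u * d) ^ i) * d ^ (j + q) := by
  have commute_d : Commute (d ^ j) (u ^ B * (d * u) ^ p) :=
    ((h.symm.commute_pow_of_even hj).pow_right B).mul_right
      ((h.symm.commute_pow_mul_swap_of_even hj).pow_right p)
  have swap_x : u ^ B * (u * d) ^ i = (d * u) ^ i * u ^ B :=
    ((h.semiconjBy_pow_of_odd hB).pow_right i).eq
  calc downUpMonomial u d A i j * downUpMonomial u d B p q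
      = u ^ A * (d * u) ^ i * (d ^ j * (u ^ B * (d * u) ^ p)) * d ^ q := by
        simp only [downUpMonomial, mul_assoc]
    _ = u ^ A * ((d * u) ^ i * u ^ B) * (d * u) ^ p * (d ^ j * d ^ q) := by
        rw [commute_d.eq]
        simp only [mul_assoc]
    _ = u ^ (A + B) * ((u * d) ^ i * (d * u) ^ p) * d ^ (j + q) := by
        rw [← swap_x]
        simp only [pow_add, mul_assoc]
    _ = u ^ (A + B) * ((d * u) ^ p * (u * d) ^ i) * d ^ (j + q) := by
        rw [(h.commute_mul_swap.pow_pow p i).eq]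

theorem downUpMonomial_mul_of_odd_odd (h : IsDownUpPair u d) (hj : Odd j) (hB : Odd B) :
    downUpMonomial u d A i j * downUpMonomial u d B p q =
      downUpMonomial u d (A + B - 1) (i + p + 1) (j + q - 1) := by
  obtain ⟨J, rfl⟩ := hj
  obtain ⟨K, rfl⟩ := hB
  have merge : d ^ (2 * J + 1) * (u * (d * u) ^ p) = (d * u) ^ (p + 1) * d ^ (2 * J) := by
    rw [← ((h.symm.commute_pow_mul_swap_of_even (even_two_mul J)).pow_right (p + 1)).eq,
      pow_succ' (d * u), pow_succ]
    simp only [mul_assoc]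
  calc downUpMonomial u d A i (2 * J + 1) * downUpMonomial u d (2 * K + 1) p q
      = downUpMonomial u d A i (2 * J + 1) *
          (u ^ (2 * K) * (u * (d * u) ^ p) * d ^ q) := by
        simp only [downUpMonomial, pow_succ, mul_assoc]
    _ = downUpMonomial u d (A + 2 * K) (i + p + 1) (2 * J + q) := by
        rw [h.downUpMonomial_mul_pow_mul_mul_pow (even_two_mul K) merge, ← pow_add,
          ← add_assoc, downUpMonomial]
    _ = downUpMonomial u d (A + (2 * K + 1) - 1) (i + p + 1) (2 * J + 1 + q - 1) := by
        congr 1; omega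

theorem downUpMonomial_swap_of_even (h : IsDownUpPair u d) (hB : Even B) (hq : Even q) :
    downUpMonomial d u B p q = u ^ q * (u * d) ^ p * d ^ B := by
  have commute_d : Commute (d ^ B) ((u * d) ^ p * u ^ q) :=
    ((h.symm.commute_pow_mul_of_even hB).pow_right p).mul_right
      ((h.symm.commute_pow_of_even hB).pow_right q)
  rw [downUpMonomial, mul_assoc, commute_d.eq,
    ((h.commute_pow_mul_swap_of_even hq).pow_right p).eq]

theorem downUpMonomial_swap_of_odd (h : IsDownUpPair u d) (hB : Odd B) (hq : Odd q) :
    downUpMonomial d u B p q = downUpMonomial u d (q - 1) (p + 1) (B - 1) := by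
  have swap_x : d ^ B * (u * d) ^ p = (d * u) ^ p * d ^ B :=
    ((h.symm.semiconjBy_pow_swap_of_odd hB).pow_right p).eq
  calc downUpMonomial d u B p q
      = downUpMonomial u d 0 p B * downUpMonomial u d q 0 0 := by
        rw [downUpMonomial, swap_x]
        simp only [downUpMonomial, pow_zero, one_mul, mul_one]
    _ = downUpMonomial u d (q - 1) (p + 1) (B - 1) := by
        rw [h.downUpMonomial_mul_of_odd_odd hB hq, zero_add, add_zero, add_zero]

theorem downUpMonomial_mul_swap_of_even_even (h : IsDownUpPair u d) (hj : Even j)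
    (hB : Even B) (hq : Even q) :
    downUpMonomial u d A i j * downUpMonomial d u B p q =
      u ^ (A + q) * ((d * u) ^ i * (u * d) ^ p) * d ^ (j + B) := by
  have commute_y : Commute (d ^ j) ((u * d) ^ p) :=
    (h.symm.commute_pow_mul_of_even hj).pow_right p
  rw [h.downUpMonomial_swap_of_even hB hq, h.downUpMonomial_mul_pow_mul_mul_pow hq commute_y]

theorem downUpMonomial_mul_swap_of_odd_even (h : IsDownUpPair u d) (hj : Odd j)
    (hB : Even B) (hq : Even q) :
    downUpMonomial u d A i j * downUpMonomial d u B p q =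
      downUpMonomial u d (A + q) (i + p) (j + B) := by
  have swap_y : SemiconjBy (d ^ j) ((u * d) ^ p) ((d * u) ^ p) :=
    (h.symm.semiconjBy_pow_swap_of_odd hj).pow_right p
  rw [h.downUpMonomial_swap_of_even hB hq, h.downUpMonomial_mul_pow_mul_mul_pow hq swap_y,
    ← pow_add, downUpMonomial]

theorem downUpMonomial_mul_swap_of_even_odd (h : IsDownUpPair u d) (hj : Even j)
    (hB : Odd B) (hq : Odd q) :
    downUpMonomial u d A i j * downUpMonomial d u B p q =
      downUpMonomial u d (A + q - 1) (i + p + 1) (j + B - 1) := by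
  have := hB.pos
  have := hq.pos
  rw [h.downUpMonomial_swap_of_odd hB hq,
    h.downUpMonomial_mul_of_even_even hj (Nat.Odd.sub_odd hq odd_one)]
  congr 1 <;> omega

theorem downUpMonomial_mul_swap_of_odd_odd_of_le (h : IsDownUpPair u d) (hj : Odd j)
    (hB : Odd B) (hq : Odd q) (hip : i ≤ p) :
    downUpMonomial u d A i j * downUpMonomial d u B p q =
      downUpMonomial u d (A + q + 2 * i) (p - i) (j + B + 2 * i) := by
  have := hB.pos
  have := hq.pos
  rw [h.downUpMonomial_swap_of_odd hB hq,
    h.downUpMonomial_mul_of_odd_even hj (Nat.Odd.sub_odd hq odd_one),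
    h.pow_mul_mul_pow_of_lt _ _ (Nat.lt_succ_of_le hip)]
  congr 1 <;> omega

theorem downUpMonomial_mul_swap_of_odd_odd_of_lt (h : IsDownUpPair u d) (hj : Odd j)
    (hB : Odd B) (hq : Odd q) (hpi : p < i) :
    downUpMonomial u d A i j * downUpMonomial d u B p q =
      downUpMonomial u d (A + q + 2 * p + 1) (i - p - 1) (j + B + 2 * p + 1) := by
  have := hB.pos
  have := hq.pos
  rw [h.downUpMonomial_swap_of_odd hB hq,
    h.downUpMonomial_mul_of_odd_even hj (Nat.Odd.sub_odd hq odd_one),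
    h.pow_mul_mul_pow_of_le _ _ (Nat.succ_le_of_lt hpi)]
  congr 1 <;> omega

end Products

end IsDownUpPair

theorem isDownUpPair_uGen_dGen : IsDownUpPair uGen dGen where
  commute_sq_left := by
    have rel := RingQuot.mkAlgHom_rel ℂ DownUpRel.rel2
    simp only [map_mul] at rel
    rw [Commute, SemiconjBy, pow_two, ← mul_assoc]
    exact rel.symm
  commute_sq_right := by
    have rel := RingQuot.mkAlgHom_rel ℂ DownUpRel.rel1
    simp only [map_mul] at rel
    rw [Commute, SemiconjBy, pow_two, ← mul_assoc]
    exact rel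

theorem orbitSum_eq_downUpMonomial_add (n a b c : ℕ) :
    orbitSum n a b c =
      downUpMonomial uGen dGen a b c + lam n ^ (b + c) • downUpMonomial dGen uGen a b c :=
  rfl

theorem lam_pow_eq_one_of_dvd {n m : ℕ} (hnm : n ∣ m) : lam n ^ m = 1 := by
  obtain rfl | hn := eq_or_ne n 0
  · rw [zero_dvd_iff.mp hnm, pow_zero]
  · exact (Complex.isPrimitiveRoot_exp n hn).pow_eq_one_iff_dvd m |>.mpr hnm

/- The equations between exponents say that the products of monomials preserve the degree in `d`,
and hence the exponent of `λ`. -/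
theorem orbitSum_mul_orbitSum {n A i j B p q a b c a' b' c' : ℕ} (hn : n ∣ B + 2 * p + q)
    (hmul : ∀ {u d : DUAlg}, IsDownUpPair u d →
      downUpMonomial u d A i j * downUpMonomial u d B p q = downUpMonomial u d a b c)
    (hmul_swap : ∀ {u d : DUAlg}, IsDownUpPair u d →
      downUpMonomial u d A i j * downUpMonomial d u B p q = downUpMonomial u d a' b' c')
    (hbc : b + c = i + j + (p + q)) (hbc' : b' + c' = i + j + (B + p)) :
    orbitSum n A i j * orbitSum n B p q =
      orbitSum n a b c + lam n ^ (p + q) • orbitSum n a' b' c' := by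
  have h := isDownUpPair_uGen_dGen
  have lam_mul : lam n ^ (p + q) * lam n ^ (b' + c') = lam n ^ (i + j) := by
    rw [← pow_add, hbc', show p + q + (i + j + (B + p)) = i + j + (B + 2 * p + q) by ring,
      pow_add, lam_pow_eq_one_of_dvd hn, mul_one]
  have lam_mul' : lam n ^ (p + q) * lam n ^ (i + j) = lam n ^ (b + c) := by
    rw [hbc, pow_add _ (i + j), mul_comm]
  simp only [orbitSum_eq_downUpMonomial_add, mul_add, add_mul, smul_mul_assoc,
    mul_smul_comm (lam n ^ (p + q)), hmul h, hmul_swap h, hmul h.symm, hmul_swap h.symm, smul_add,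
    smul_smul, lam_mul, lam_mul']
  abel

theorem orbitSum_deg_n_mul_deg_two_n_general {n A i j B p q : ℕ}
    (hn : n ∣ B + 2 * p + q) (heven : Even (B + 2 * p + q)) :
    (Even j → Odd q → p ≥ i →
      orbitSum n A i j * orbitSum n B p q =
        lam n ^ (p + q) • orbitSum n (A + q - 1) (i + p + 1) (j + B - 1) +
          orbitSum n (A + B + 2 * i) (p - i) (j + q + 2 * i)) ∧
    (Even j → Odd q → p < i →
      orbitSum n A i j * orbitSum n B p q =
        lam n ^ (p + q) • orbitSum n (A + q - 1) (i + p + 1) (j + B - 1) +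
          orbitSum n (A + B + 2 * p + 1) (i - p - 1) (j + q + 2 * p + 1)) ∧
    (Odd j → Odd q → p ≥ i →
      orbitSum n A i j * orbitSum n B p q =
        orbitSum n (A + B - 1) (i + p + 1) (j + q - 1) +
          lam n ^ (p + q) • orbitSum n (A + q + 2 * i) (p - i) (j + B + 2 * i)) ∧
    (Odd j → Odd q → p < i →
      orbitSum n A i j * orbitSum n B p q =
        orbitSum n (A + B - 1) (i + p + 1) (j + q - 1) +
          lam n ^ (p + q) • orbitSum n (A + q + 2 * p + 1) (i - p - 1) (j + B + 2 * p + 1)) ∧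
    (Even j → Even q → p ≤ i →
      orbitSum n A i j * orbitSum n B p q =
        orbitSum n (A + B) (i + p) (j + q) +
          lam n ^ (p + q) • orbitSum n (A + q + 2 * p) (i - p) (j + B + 2 * p)) ∧
    (Even j → Even q → p > i →
      orbitSum n A i j * orbitSum n B p q =
        orbitSum n (A + B) (i + p) (j + q) +
          lam n ^ (p + q) • orbitSum n (A + q + 2 * i + 1) (p - i - 1) (j + B + 2 * i + 1)) ∧
    (Odd j → Even q → p ≤ i →
      orbitSum n A i j * orbitSum n B p q =
        lam n ^ (p + q) • orbitSum n (A + q) (i + p) (j + B) +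
          orbitSum n (A + B + 2 * p) (i - p) (j + q + 2 * p)) ∧
    (Odd j → Even q → p > i →
      orbitSum n A i j * orbitSum n B p q =
        lam n ^ (p + q) • orbitSum n (A + q) (i + p) (j + B) +
          orbitSum n (A + B + 2 * i + 1) (p - i - 1) (j + q + 2 * i + 1)) := by
  have oddB (hq : Odd q) : Odd B := by grind
  have evenB (hq : Even q) : Even B := by grind
  refine ⟨fun hj hq hp => ?_, fun hj hq hp => ?_, fun hj hq hp => ?_, fun hj hq hp => ?_,
    fun hj hq hp => ?_, fun hj hq hp => ?_, fun hj hq hp => ?_, fun hj hq hp => ?_⟩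
  · rw [add_comm]
    exact orbitSum_mul_orbitSum hn
      (fun h => (h.downUpMonomial_mul_of_even_odd hj (oddB hq)).trans
        (h.pow_mul_mul_pow_of_le _ _ hp))
      (fun h => h.downUpMonomial_mul_swap_of_even_odd hj (oddB hq) hq) (by grind) (by grind)
  · rw [add_comm]
    exact orbitSum_mul_orbitSum hn
      (fun h => (h.downUpMonomial_mul_of_even_odd hj (oddB hq)).trans
        (h.pow_mul_mul_pow_of_lt _ _ hp))
      (fun h => h.downUpMonomial_mul_swap_of_even_odd hj (oddB hq) hq) (by grind) (by grind)
  · exact orbitSum_mul_orbitSum hn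
      (fun h => h.downUpMonomial_mul_of_odd_odd hj (oddB hq))
      (fun h => h.downUpMonomial_mul_swap_of_odd_odd_of_le hj (oddB hq) hq hp) (by grind) (by grind)
  · exact orbitSum_mul_orbitSum hn
      (fun h => h.downUpMonomial_mul_of_odd_odd hj (oddB hq))
      (fun h => h.downUpMonomial_mul_swap_of_odd_odd_of_lt hj (oddB hq) hq hp) (by grind) (by grind)
  · exact orbitSum_mul_orbitSum hn
      (fun h => h.downUpMonomial_mul_of_even_even hj (evenB hq))
      (fun h => (h.downUpMonomial_mul_swap_of_even_even hj (evenB hq) hq).trans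
        (h.pow_mul_mul_pow_of_le _ _ hp)) (by grind) (by grind)
  · exact orbitSum_mul_orbitSum hn
      (fun h => h.downUpMonomial_mul_of_even_even hj (evenB hq))
      (fun h => (h.downUpMonomial_mul_swap_of_even_even hj (evenB hq) hq).trans
        (h.pow_mul_mul_pow_of_lt _ _ hp)) (by grind) (by grind)
  · rw [add_comm]
    exact orbitSum_mul_orbitSum hn
      (fun h => (h.downUpMonomial_mul_of_odd_even hj (evenB hq)).trans
        (h.pow_mul_mul_pow_of_le _ _ hp))
      (fun h => h.downUpMonomial_mul_swap_of_odd_even hj (evenB hq) hq) (by grind) (by grind)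
  · rw [add_comm]
    exact orbitSum_mul_orbitSum hn
      (fun h => (h.downUpMonomial_mul_of_odd_even hj (evenB hq)).trans
        (h.pow_mul_mul_pow_of_lt _ _ hp))
      (fun h => h.downUpMonomial_mul_swap_of_odd_even hj (evenB hq) hq) (by grind) (by grind)

/-- For `n` odd, the product of a degree-`n` orbit sum with a degree-`2n` orbit
sum in the down-up algebra `A(0,1)` (Proposition 3.4 of the paper). -/
theorem orbitSum_deg_n_mul_deg_two_n (n : ℕ) (hodd : Odd n)
    (i j p q : ℕ) (hij : 2 * i + j ≤ n) (hpq : 2 * p + q ≤ 2 * n) :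
    (Even j → Odd q → p ≥ i →
      orbitSum n (n - 2 * i - j) i j * orbitSum n (2 * n - 2 * p - q) p q =
        (lam n ^ (p + q)) •
            orbitSum n (n - 2 * i - j + q - 1) (i + p + 1) (2 * n - 2 * p - q + j - 1) +
          orbitSum n (3 * n - j - 2 * p - q) (p - i) (q + j + 2 * i)) ∧
    (Even j → Odd q → p < i →
      orbitSum n (n - 2 * i - j) i j * orbitSum n (2 * n - 2 * p - q) p q =
        (lam n ^ (p + q)) •
            orbitSum n (n - 2 * i - j + q - 1) (i + p + 1) (2 * n - 2 * p - q + j - 1) +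
          orbitSum n (3 * n - 2 * i - j - q + 1) (i - p - 1) (j + 2 * p + q + 1)) ∧
    (Odd j → Odd q → p ≥ i →
      orbitSum n (n - 2 * i - j) i j * orbitSum n (2 * n - 2 * p - q) p q =
        orbitSum n (3 * n - 2 * i - j - 2 * p - q - 1) (i + p + 1) (j + q - 1) +
          (lam n ^ (p + q)) •
            orbitSum n (n - j + q) (p - i) (2 * n - 2 * p - q + j + 2 * i)) ∧
    (Odd j → Odd q → p < i →
      orbitSum n (n - 2 * i - j) i j * orbitSum n (2 * n - 2 * p - q) p q =
        orbitSum n (3 * n - 2 * i - j - 2 * p - q - 1) (i + p + 1) (j + q - 1) +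
          (lam n ^ (p + q)) •
            orbitSum n (n - 2 * i - j + q + 2 * p + 1) (i - p - 1) (2 * n - q + j + 1)) ∧
    (Even j → Even q → p ≤ i →
      orbitSum n (n - 2 * i - j) i j * orbitSum n (2 * n - 2 * p - q) p q =
        orbitSum n (3 * n - 2 * i - j - 2 * p - q) (i + p) (j + q) +
          (lam n ^ (p + q)) •
            orbitSum n (n - 2 * i - j + q + 2 * p) (i - p) (2 * n + j - q)) ∧
    (Even j → Even q → p > i →
      orbitSum n (n - 2 * i - j) i j * orbitSum n (2 * n - 2 * p - q) p q =
        orbitSum n (3 * n - 2 * i - j - 2 * p - q) (i + p) (j + q) +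
          (lam n ^ (p + q)) •
            orbitSum n (n - j + q + 1) (p - i - 1) (2 * n + 2 * i + j - 2 * p - q + 1)) ∧
    (Odd j → Even q → p ≤ i →
      orbitSum n (n - 2 * i - j) i j * orbitSum n (2 * n - 2 * p - q) p q =
        (lam n ^ (p + q)) •
            orbitSum n (n - 2 * i - j + q) (i + p) (2 * n - 2 * p - q + j) +
          orbitSum n (3 * n - 2 * i - j - q) (i - p) (q + j + 2 * p)) ∧
    (Odd j → Even q → p > i →
      orbitSum n (n - 2 * i - j) i j * orbitSum n (2 * n - 2 * p - q) p q =
        (lam n ^ (p + q)) •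
            orbitSum n (n - 2 * i - j + q) (i + p) (2 * n - 2 * p - q + j) +
          orbitSum n (3 * n - 2 * p - j - q + 1) (p - i - 1) (j + 2 * i + q + 1)) := by
  have h := orbitSum_deg_n_mul_deg_two_n_general (n := n) (A := n - 2 * i - j) (i := i) (j := j)
    (B := 2 * n - 2 * p - q) (p := p) (q := q) ⟨2, by omega⟩ ⟨n, by omega⟩
  refine h.imp ?_ <| And.imp ?_ <| And.imp ?_ <| And.imp ?_ <| And.imp ?_ <| And.imp ?_ <|
    And.imp ?_ ?_ <;> intro h hj hq hp <;> rw [h hj hq hp] <;> congr! 2 <;>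
      first | omega | (congr! 1 <;> omega)
end
end
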